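/- Let δ21 = X² + 2X + 2, δ22 = X² + 2, δ23 = X² − 2X + 2, δ41 = X⁴ + 2X³ + 2X² + 4X + 4, δ42 = X⁴ + 2X² + 4, δ81 = X⁸ + 4X⁷ + 6X⁶ + 4X⁵ + 2X⁴ + 8X³ + 24X² + 32X + 16, δ82 = X⁸ + 2X⁶ + 4X⁵ + 2X⁴ + 8X³ + 8X² + 16, δ83 = X⁸ + 2X⁷ + 2X⁶ − 4X⁴ + 8X² + 16X + 16, and δ84 = X⁸ + 2X⁶ − 4X⁵ + 2X⁴ − 8X³ + 8X² + 16. Then for every n ≥ 5: F_2(n,0,0,0,0,0) = 2^{n−5} − (1/32)·(7ρ_n(δ21) + 4ρ_n(δ22) + 2ρ_n(δ23) + 5ρ_n(δ41) + 3ρ_n(δ42) + 2ρ_n(δ81) + ρ_n(δ82) + ρ_n(δ83) + ρ_n(δ84)); F_2(n,0,0,0,1,0) = 2^{n−5} − (1/32)·(3ρ_n(δ21) + 2ρ_n(δ23) + ρ_n(δ41) − ρ_n(δ42) − 2ρ_n(δ81) − ρ_n(δ82) + ρ_n(δ83) − ρ_n(δ84)); F_2(n,0,0,0,0,1) = 2^{n−5}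 − (1/32)·(ρ_n(δ21) + 2ρ_n(δ22) − 2ρ_n(δ23) − 3ρ_n(δ41) − 3ρ_n(δ42) + ρ_n(δ82) − ρ_n(δ83) − ρ_n(δ84)); and F_2(n,0,0,0,1,1) = 2^{n−5} − (1/32)·(−3ρ_n(δ21) − 2ρ_n(δ22) − 2ρ_n(δ23) + ρ_n(δ41) + ρ_n(δ42) − ρ_n(δ82) − ρ_n(δ83) + ρ_n(δ84)). All equalities are between complex numbers, the counts being viewed in ℂ. -/

import Mathlib

open Polynomial

/-- For a finite field `K` with `2^n` elements, the `k`-th trace function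
`T_k(a) = Σ_S ∏_{i ∈ S} a^(2^i)`, the sum over all `k`-element subsets `S` of `{0,…,n-1}`. -/
noncomputable def traceFn (q n k : ℕ) {K : Type*} [CommRing K] (a : K) : K :=
  ∑ S ∈ Finset.powersetCard k (Finset.range n), ∏ i ∈ S, a ^ (q ^ i)

/-- `ρ_n(γ)`: the sum of the `n`-th powers of the complex roots of `γ ∈ ℤ[X]`,
counted with multiplicity. -/
noncomputable def rho (n : ℕ) (γ : Polynomial ℤ) : ℂ :=
  ((γ.map (Int.castRingHom ℂ)).roots.map (· ^ n)).sum

/-- `F_2(n,t₁,t₂,t₃,t₄,t₅)`: the number of `a` in the field `K` (of `2^n` elements)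
with `T_k(a) = t_k` for `k = 1,…,5`. -/
noncomputable def cnt5 (n : ℕ) (K : Type) [Field K] [Fintype K] (t1 t2 t3 t4 t5 : K) : ℕ :=
  Nat.card {a : K // traceFn 2 n 1 a = t1 ∧ traceFn 2 n 2 a = t2 ∧
    traceFn 2 n 3 a = t3 ∧ traceFn 2 n 4 a = t4 ∧ traceFn 2 n 5 a = t5}

noncomputable def d21 : Polynomial ℤ := X ^ 2 + 2 * X + 2
noncomputable def d22 : Polynomial ℤ := X ^ 2 + 2
noncomputable def d23 : Polynomial ℤ := X ^ 2 - 2 * X + 2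
noncomputable def d41 : Polynomial ℤ := X ^ 4 + 2 * X ^ 3 + 2 * X ^ 2 + 4 * X + 4
noncomputable def d42 : Polynomial ℤ := X ^ 4 + 2 * X ^ 2 + 4
noncomputable def d81 : Polynomial ℤ :=
  X ^ 8 + 4 * X ^ 7 + 6 * X ^ 6 + 4 * X ^ 5 + 2 * X ^ 4 + 8 * X ^ 3 + 24 * X ^ 2 + 32 * X + 16
noncomputable def d82 : Polynomial ℤ :=
  X ^ 8 + 2 * X ^ 6 + 4 * X ^ 5 + 2 * X ^ 4 + 8 * X ^ 3 + 8 * X ^ 2 + 16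
noncomputable def d83 : Polynomial ℤ :=
  X ^ 8 + 2 * X ^ 7 + 2 * X ^ 6 - 4 * X ^ 4 + 8 * X ^ 2 + 16 * X + 16
noncomputable def d84 : Polynomial ℤ :=
  X ^ 8 + 2 * X ^ 6 - 4 * X ^ 5 + 2 * X ^ 4 - 8 * X ^ 3 + 8 * X ^ 2 + 16

/-!
The values `T_k(a)` are, up to sign, the leading coefficients of the characteristic polynomial of
`a` over `𝔽₂`, that is, the low coefficients of its reverse. Modulo `X ^ 6` the polynomials with
constant coefficient `1` form the group `ℤ/8 × ℤ/2 × ℤ/2`, the isomorphism being given by power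
sums. By orthogonality, the counts are therefore averages of the sums over `K` of the 32 characters
of this group.

The sum of a character over `K` is the `n`-th coefficient of `u L' / L`, where `L` is the
`L`-function of the character over the monic polynomials. For a nontrivial character `L` is a
polynomial of degree at most `4`, so the sum is minus a power sum of the reciprocal roots of `L`.
Multiplying the reciprocal polynomials over the Galois orbits of characters yields products of the
polynomials `δ`.
-/

section MonicPolynomials

lemma finite_setOf_isMonicOfDegree (R : Type*) [Semiring R] [Finite R] (n : ℕ) :
    {f : R[X] | f.IsMonicOfDegree n}.Finite := by
  refine Set.Finite.of_injOn (f := fun f (i : Fin n) ↦ f.coeff i) (t := Set.univ)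
    (fun _ _ ↦ Set.mem_univ _) (fun f hf g hg h ↦ ?_) Set.finite_univ
  ext k
  obtain hk | hk := lt_or_ge k n
  · exact congrFun h ⟨k, hk⟩
  · exact IsMonicOfDegree.coeff_eq hf hg hk

/-- The monic polynomials of degree `n` over a finite ring. -/
noncomputable def monicsOfDegree (R : Type*) [Semiring R] [Finite R] (n : ℕ) : Finset R[X] :=
  (finite_setOf_isMonicOfDegree R n).toFinset

@[simp]
lemma mem_monicsOfDegree {R : Type*} [Semiring R] [Finite R] {n : ℕ} {f : R[X]} :
    f ∈ monicsOfDegree R n ↔ f.IsMonicOfDegree n := by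
  simp [monicsOfDegree]

variable {F M : Type*} [Field F] [AddCommMonoid M]

lemma sum_monicsOfDegree_zero [Finite F] (φ : F[X] → M) :
    ∑ f ∈ monicsOfDegree F 0, φ f = φ 1 := by
  have : monicsOfDegree F 0 = {1} := by ext f; simp
  simp [this]

lemma isMonicOfDegree_mul_X_add_C {m : ℕ} {f : F[X]} (hf : f.IsMonicOfDegree m) (b : F) :
    (f * X + C b).IsMonicOfDegree (m + 1) :=
  (hf.mul (isMonicOfDegree_X F)).add_right (by simp)

lemma isMonicOfDegree_divX {m : ℕ} {f : F[X]} (hf : f.IsMonicOfDegree (m + 1)) :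
    f.divX.IsMonicOfDegree m := by
  rw [isMonicOfDegree_iff, natDegree_divX_eq_natDegree_tsub_one, hf.natDegree_eq, coeff_divX]
  exact ⟨le_rfl, by simpa [hf.natDegree_eq] using hf.monic.coeff_natDegree⟩

lemma sum_monicsOfDegree_succ [Fintype F] (m : ℕ) (φ : F[X] → M) :
    ∑ f ∈ monicsOfDegree F (m + 1), φ f =
      ∑ f ∈ monicsOfDegree F m, ∑ b : F, φ (f * X + C b) := by
  rw [← Finset.sum_product']
  refine Finset.sum_bij' (fun f _ ↦ (f.divX, f.coeff 0)) (fun x _ ↦ x.1 * X + C x.2)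
    ?_ ?_ ?_ ?_ ?_
  · intro f hf
    simpa using isMonicOfDegree_divX (mem_monicsOfDegree.1 hf)
  · rintro ⟨f, b⟩ hf
    rw [Finset.mem_product, mem_monicsOfDegree] at hf
    exact mem_monicsOfDegree.2 (isMonicOfDegree_mul_X_add_C hf.1 b)
  · exact fun f _ ↦ divX_mul_X_add f
  · rintro ⟨f, b⟩ -
    ext <;> simp [coeff_divX]
  · exact fun f _ ↦ by rw [divX_mul_X_add]

end MonicPolynomials

section VonMangoldt

open UniqueFactorizationMonoid

variable {F : Type*} [Field F]

open Classical in
/-- The von Mangoldt function of `F[X]`: the degree of the irreducible factor of a prime power, and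
`0` on all other polynomials. -/
noncomputable def polyVonMangoldt (f : F[X]) : ℕ :=
  if IsPrimePow f then (radical f).natDegree else 0

lemma polyVonMangoldt_pow {P : F[X]} (hP : Irreducible P) {j : ℕ} (hj : j ≠ 0) :
    polyVonMangoldt (P ^ j) = P.natDegree := by
  classical
  have hpow : IsPrimePow (P ^ j) := hP.prime.isPrimePow.pow hj
  rw [polyVonMangoldt, if_pos hpow, radical_pow_of_prime hP.prime hj]
  exact natDegree_eq_of_degree_eq degree_normalize

lemma polyVonMangoldt_eq_zero {f : F[X]} (hf : ¬ IsPrimePow f) : polyVonMangoldt f = 0 :=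
  if_neg hf

lemma exists_monic_irreducible_pow {f : F[X]} (hf : f.Monic) (hpow : IsPrimePow f) :
    ∃ (P : F[X]) (j : ℕ), P.Monic ∧ Irreducible P ∧ j ≠ 0 ∧ P ^ j = f := by
  classical
  obtain ⟨p, j, hp, hj, rfl⟩ := hpow
  have hm : (normalize p).Monic := monic_normalize hp.ne_zero
  exact ⟨normalize p, j, hm, (normalize_associated p).irreducible_iff.2 hp.irreducible, hj.ne',
    eq_of_monic_of_associated (hm.pow j) hf (normalize_associated p).pow_pow⟩

open Classical in
lemma prod_normalizedFactors_of_monic {f : F[X]} (hf : f.Monic) :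
    (normalizedFactors f).prod = f := by
  simpa [hf.leadingCoeff] using leadingCoeff_mul_prod_normalizedFactors f

open Classical in
lemma natDegree_eq_sum_primeFactors {f : F[X]} (hf : f.Monic) :
    f.natDegree = ∑ P ∈ primeFactors f, (normalizedFactors f).count P * P.natDegree := by
  have hmonic : ∀ P ∈ normalizedFactors f, P.Monic := fun P hP ↦
    ((Polynomial.mem_normalizedFactors_iff hf.ne_zero).1 hP).2.1
  conv_lhs => rw [← prod_normalizedFactors_of_monic hf, natDegree_multiset_prod_of_monic _ hmonic]
  simp [Finset.sum_multiset_map_count]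

open Classical in
lemma pow_dvd_iff_le_count_normalizedFactors {f P : F[X]} (hf : f ≠ 0)
    (hP : Irreducible P) (hPm : P.Monic) (j : ℕ) :
    P ^ j ∣ f ↔ j ≤ (normalizedFactors f).count P := by
  rw [pow_dvd_iff_le_emultiplicity, emultiplicity_eq_count_normalizedFactors hP hf,
    hPm.normalize_eq_self, Nat.cast_le]

open Classical in
/-- The monic divisors of a nonzero polynomial, obtained as the products of its monic irreducible
factors. -/
noncomputable def monicDivisors (f : F[X]) : Finset F[X] :=
  (normalizedFactors f).powerset.toFinset.image Multiset.prod

lemma mem_monicDivisors {f d : F[X]} (hf : f ≠ 0) : d ∈ monicDivisors f ↔ d.Monic ∧ d ∣ f := by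
  classical
  simp only [monicDivisors, Finset.mem_image, Multiset.mem_toFinset, Multiset.mem_powerset]
  constructor
  · rintro ⟨s, hs, rfl⟩
    refine ⟨?_, (Multiset.prod_dvd_prod_of_le hs).trans (prod_normalizedFactors hf).dvd⟩
    simpa using monic_multiset_prod_of_monic s id fun P hP ↦
      ((Polynomial.mem_normalizedFactors_iff hf).1 (Multiset.mem_of_le hs hP)).2.1
  · rintro ⟨hd, hdvd⟩
    exact ⟨normalizedFactors d,
      (dvd_iff_normalizedFactors_le_normalizedFactors hd.ne_zero hf).1 hdvd,
      prod_normalizedFactors_of_monic hd⟩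

/-- The analogue of `∑ d ∣ n, Λ d = log n`. -/
lemma sum_polyVonMangoldt {f : F[X]} (hf : f.Monic) :
    ∑ d ∈ monicDivisors f, polyVonMangoldt d = f.natDegree := by
  classical
  have hfactor {x : (_ : F[X]) × ℕ}
      (hx : x ∈ (primeFactors f).sigma fun P ↦ Finset.Icc 1 ((normalizedFactors f).count P)) :
      Irreducible x.1 ∧ x.1.Monic ∧ x.2 ≠ 0 ∧ x.1 ^ x.2 ∣ f := by
    obtain ⟨hP, hj⟩ := Finset.mem_sigma.1 hx
    obtain ⟨hP, hPm, -⟩ := (Polynomial.mem_normalizedFactors_iff hf.ne_zero).1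
      (mem_primeFactors.1 hP)
    rw [Finset.mem_Icc] at hj
    exact ⟨hP, hPm, by lia, (pow_dvd_iff_le_count_normalizedFactors hf.ne_zero hP hPm _).2 hj.2⟩
  calc ∑ d ∈ monicDivisors f, polyVonMangoldt d
      = ∑ x ∈ (primeFactors f).sigma fun P ↦ Finset.Icc 1 ((normalizedFactors f).count P),
          x.1.natDegree := ?_
    _ = f.natDegree := by simp [Finset.sum_sigma, ← natDegree_eq_sum_primeFactors hf]
  symm
  refine Finset.sum_of_injOn (fun x ↦ x.1 ^ x.2) ?_ ?_ ?_ ?_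
  · rintro ⟨P, i⟩ hx ⟨Q, j⟩ hy (hpow : P ^ i = Q ^ j)
    obtain ⟨hP, hPm, hi, -⟩ := hfactor hx
    obtain ⟨hQ, hQm, hj, -⟩ := hfactor hy
    obtain rfl : P = Q := by
      simpa [radical_pow_of_prime hP.prime hi, radical_pow_of_prime hQ.prime hj,
        hPm.normalize_eq_self, hQm.normalize_eq_self] using congrArg radical hpow
    obtain rfl : i = j := pow_injective_of_not_isUnit hP.not_isUnit hP.ne_zero hpow
    rfl
  · exact fun x hx ↦ have ⟨_, hPm, _, hdvd⟩ := hfactor hx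
      (mem_monicDivisors hf.ne_zero).2 ⟨hPm.pow _, hdvd⟩
  · intro d hd hnot
    obtain ⟨hdm, hdvd⟩ := (mem_monicDivisors hf.ne_zero).1 hd
    refine polyVonMangoldt_eq_zero fun hpow ↦ hnot ?_
    obtain ⟨P, j, hPm, hP, hj, rfl⟩ := exists_monic_irreducible_pow hdm hpow
    have hPf := (Polynomial.mem_normalizedFactors_iff hf.ne_zero).2
      ⟨hP, hPm, (dvd_pow_self P hj).trans hdvd⟩
    have hcount := (pow_dvd_iff_le_count_normalizedFactors hf.ne_zero hP hPm j).1 hdvd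
    exact ⟨⟨P, j⟩, Finset.mem_sigma.2
      ⟨mem_primeFactors.2 hPf, Finset.mem_Icc.2 ⟨by lia, hcount⟩⟩, rfl⟩
  · exact fun x hx ↦ have ⟨hP, _, hj, _⟩ := hfactor hx; (polyVonMangoldt_pow hP hj).symm

end VonMangoldt

section EulerProduct

open Finset.HasAntidiagonal (antidiagonal)

variable {F : Type*} [Field F] [Finite F]

lemma sum_sum_monicDivisors {M : Type*} [AddCommMonoid M] (φ : F[X] → F[X] → M) (n : ℕ) :
    ∑ f ∈ monicsOfDegree F n, ∑ d ∈ monicDivisors f, φ (f / d) d =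
      ∑ x ∈ antidiagonal n, ∑ e ∈ monicsOfDegree F x.1, ∑ d ∈ monicsOfDegree F x.2, φ e d := by
  simp only [← Finset.sum_product']
  rw [Finset.sum_sigma', Finset.sum_sigma']
  have hquot {f d : F[X]} (hf : f ∈ monicsOfDegree F n) (hd : d ∈ monicDivisors f) :
      (f / d).Monic ∧ d.Monic ∧ f / d * d = f ∧ (f / d).natDegree + d.natDegree = n := by
    rw [mem_monicsOfDegree] at hf
    obtain ⟨hdm, e, rfl⟩ := (mem_monicDivisors hf.ne_zero).1 hd
    have hem := hdm.of_mul_monic_left hf.monic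
    rw [mul_div_cancel_left₀ _ hdm.ne_zero, mul_comm e]
    exact ⟨hem, hdm, rfl, by rw [← hf.natDegree_eq, hdm.natDegree_mul hem, add_comm]⟩
  have hprod {k m : ℕ} {e d : F[X]} (hx : (⟨(k, m), e, d⟩ : (_ : ℕ × ℕ) × F[X] × F[X]) ∈
      (antidiagonal n).sigma fun x ↦ monicsOfDegree F x.1 ×ˢ monicsOfDegree F x.2) :
      k + m = n ∧ e.IsMonicOfDegree k ∧ d.IsMonicOfDegree m := by simpa using hx
  refine Finset.sum_bij'
    (fun x _ ↦ ⟨((x.1 / x.2).natDegree, x.2.natDegree), (x.1 / x.2, x.2)⟩)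
    (fun x _ ↦ ⟨x.2.1 * x.2.2, x.2.2⟩) ?_ ?_ ?_ ?_ ?_
  · rintro ⟨f, d⟩ hx
    obtain ⟨hem, hdm, -, hdeg⟩ := hquot (Finset.mem_sigma.1 hx).1 (Finset.mem_sigma.1 hx).2
    simpa using ⟨hdeg, ⟨rfl, hem⟩, ⟨rfl, hdm⟩⟩
  · rintro ⟨⟨k, m⟩, e, d⟩ hx
    obtain ⟨rfl, he, hd⟩ := hprod hx
    simp [he.mul hd, mem_monicDivisors (he.mul hd).ne_zero, hd.monic]
  · rintro ⟨f, d⟩ hx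
    obtain ⟨-, -, hmul, -⟩ := hquot (Finset.mem_sigma.1 hx).1 (Finset.mem_sigma.1 hx).2
    simp [hmul]
  · rintro ⟨⟨k, m⟩, e, d⟩ hx
    obtain ⟨-, he, hd⟩ := hprod hx
    simp [mul_div_cancel_right₀ _ hd.ne_zero, he.natDegree_eq, hd.natDegree_eq]
  · exact fun _ _ ↦ rfl

variable {R : Type*} [CommSemiring R]

/-- The sum of `χ` over the monic polynomials of degree `m`, i.e. the coefficient of `u ^ m` in the
`L`-series of `χ`. -/
noncomputable def charSum (χ : F[X] → R) (m : ℕ) : R :=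
  ∑ f ∈ monicsOfDegree F m, χ f

/-- The sum of `Λ(f) χ(f)` over the monic polynomials of degree `k`, i.e. the coefficient of `u ^ k`
in the logarithmic derivative `u L'(u) / L(u)` of the `L`-series of `χ`. -/
noncomputable def vonMangoldtSum (χ : F[X] → R) (k : ℕ) : R :=
  ∑ f ∈ monicsOfDegree F k, polyVonMangoldt f * χ f

lemma charSum_zero (χ : F[X] → R) : charSum χ 0 = χ 1 :=
  sum_monicsOfDegree_zero χ

lemma vonMangoldtSum_zero (χ : F[X] → R) : vonMangoldtSum χ 0 = 0 := by
  rw [vonMangoldtSum, sum_monicsOfDegree_zero, polyVonMangoldt_eq_zero not_isPrimePow_one]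
  simp

/-- The identity `u L' = L (u L' / L)` of formal Dirichlet series, coefficient by coefficient. -/
lemma natCast_mul_charSum {χ : F[X] → R}
    (hχ : ∀ f g : F[X], f.Monic → g.Monic → χ (f * g) = χ f * χ g) (n : ℕ) :
    n * charSum χ n = ∑ x ∈ antidiagonal n, charSum χ x.1 * vonMangoldtSum χ x.2 := by
  calc n * charSum χ n
      = ∑ f ∈ monicsOfDegree F n, ∑ d ∈ monicDivisors f,
          χ (f / d) * (polyVonMangoldt d * χ d) := by
        rw [charSum, Finset.mul_sum]
        refine Finset.sum_congr rfl fun f hf ↦ ?_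
        rw [mem_monicsOfDegree] at hf
        rw [← hf.natDegree_eq, ← sum_polyVonMangoldt hf.monic, Nat.cast_sum, Finset.sum_mul]
        refine Finset.sum_congr rfl fun d hd ↦ ?_
        obtain ⟨hdm, e, rfl⟩ := (mem_monicDivisors hf.ne_zero).1 hd
        rw [mul_div_cancel_left₀ _ hdm.ne_zero, hχ d e hdm (hdm.of_mul_monic_left hf.monic)]
        ring
    _ = ∑ x ∈ antidiagonal n, charSum χ x.1 * vonMangoldtSum χ x.2 := by
        simp only [sum_sum_monicDivisors fun e d ↦ χ e * (polyVonMangoldt d * χ d), charSum,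
          vonMangoldtSum, Finset.sum_mul_sum]

end EulerProduct

section FieldCharpoly

open Module (finrank)

variable {F K : Type*} [Field F] [Field K] [Algebra F K]

variable (F) in
/-- The characteristic polynomial over `F` of multiplication by `a` on a finite extension `K`. -/
noncomputable def fieldCharpoly (a : K) : F[X] :=
  minpoly F a ^ (finrank F K / (minpoly F a).natDegree)

variable [FiniteDimensional F K]

lemma isMonicOfDegree_fieldCharpoly (a : K) :
    (fieldCharpoly F a).IsMonicOfDegree (finrank F K) := by
  have ha := Algebra.IsIntegral.isIntegral (R := F) a
  refine ⟨?_, (minpoly.monic ha).pow _⟩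
  rw [fieldCharpoly, natDegree_pow, Nat.div_mul_cancel (minpoly.degree_dvd ha)]

lemma eq_minpoly_pow_of_map_eq_charpoly [IsGalois F K] {a : K} {f : F[X]} (hf : f.Monic)
    (hfa : f.map (algebraMap F K) = MulSemiringAction.charpoly Gal(K/F) a) :
    ∃ m, f = minpoly F a ^ m := by
  have ha := Algebra.IsIntegral.isIntegral (R := F) a
  obtain ⟨m, g, rfl, hg⟩ : ∃ m g, f = minpoly F a ^ m * g ∧ ¬ minpoly F a ∣ g :=
    ⟨_, (FiniteMultiplicity.of_not_isUnit (minpoly.not_isUnit F a)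
      hf.ne_zero).exists_eq_pow_mul_and_not_dvd⟩
  suffices hdeg : g.natDegree = 0 by
    have hgm : g.Monic := ((minpoly.monic ha).pow m).of_mul_monic_left hf
    exact ⟨m, by rw [eq_one_of_monic_natDegree_zero hgm hdeg, mul_one]⟩
  by_contra hdeg
  rw [Polynomial.map_mul] at hfa
  have hsplits : (g.map (algebraMap F K)).Splits :=
    (MulSemiringAction.splits_charpoly Gal(K/F) a).of_dvd
      (MulSemiringAction.monic_charpoly Gal(K/F) a).ne_zero (hfa ▸ dvd_mul_left _ _)
  obtain ⟨b, hb⟩ := hsplits.exists_eval_eq_zero (by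
    rw [degree_map]
    exact fun h ↦ hdeg (natDegree_eq_of_degree_eq_some h))
  have hroot : (MulSemiringAction.charpoly Gal(K/F) a).eval b = 0 := by rw [← hfa]; simp [hb]
  obtain ⟨σ, rfl⟩ : ∃ σ : Gal(K/F), b = σ a := by
    simpa [MulSemiringAction.charpoly_eq, eval_prod, Finset.prod_eq_zero_iff, sub_eq_zero]
      using hroot
  refine hg (minpoly.dvd F a (σ.injective ?_))
  rw [map_zero, ← aeval_algHom_apply, aeval_def, eval₂_eq_eval_map, hb]

lemma map_fieldCharpoly_eq_charpoly [IsGalois F K] (a : K) :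
    (fieldCharpoly F a).map (algebraMap F K) = MulSemiringAction.charpoly Gal(K/F) a := by
  obtain ⟨f, hfa, hdeg, hf⟩ := lifts_and_natDegree_eq_and_monic
    (Algebra.IsInvariant.charpoly_mem_lifts F K Gal(K/F) a)
    (MulSemiringAction.monic_charpoly Gal(K/F) a)
  obtain ⟨m, rfl⟩ := eq_minpoly_pow_of_map_eq_charpoly hf hfa
  have hpos := minpoly.natDegree_pos (Algebra.IsIntegral.isIntegral (R := F) a)
  have hm : finrank F K = m * (minpoly F a).natDegree := by
    rw [← natDegree_pow, hdeg, MulSemiringAction.charpoly_eq, natDegree_prod_of_monic _ _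
      fun _ _ ↦ monic_X_sub_C _]
    simp [← IsGalois.card_aut_eq_finrank]
  rw [fieldCharpoly, hm, Nat.mul_div_cancel _ hpos, hfa]

lemma map_fieldCharpoly [Fintype F] [Finite K] (a : K) :
    (fieldCharpoly F a).map (algebraMap F K) =
      ∏ i ∈ Finset.range (finrank F K), (X - C (a ^ Fintype.card F ^ i)) := by
  rw [map_fieldCharpoly_eq_charpoly, MulSemiringAction.charpoly_eq, ← Fin.prod_univ_eq_prod_range
    (fun i ↦ X - C (a ^ Fintype.card F ^ i))]
  refine (Fintype.prod_bijective _ (FiniteField.bijective_frobeniusAlgEquivOfAlgebraic_pow F K)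
    _ _ fun i ↦ ?_).symm
  simp [FiniteField.coe_frobeniusAlgEquivOfAlgebraic_iterate]

lemma sum_powersetCard_eq_coeff_fieldCharpoly [Fintype F] [Finite K] (a : K) {k : ℕ}
    (hk : k ≤ finrank F K) :
    ∑ S ∈ Finset.powersetCard k (Finset.range (finrank F K)), ∏ i ∈ S, a ^ Fintype.card F ^ i =
      (-1) ^ k * algebraMap F K ((fieldCharpoly F a).coeff (finrank F K - k)) := by
  rw [← coeff_map, map_fieldCharpoly]
  simp only [sub_eq_add_neg, ← map_neg C]
  rw [Finset.prod_X_add_C_coeff _ _ (by simp), Finset.card_range, Nat.sub_sub_self hk]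
  simp only [Finset.prod_neg]
  rw [Finset.mul_sum]
  refine Finset.sum_congr rfl fun S hS ↦ ?_
  rw [(Finset.mem_powersetCard.1 hS).2, ← mul_assoc, ← mul_pow]
  simp

lemma splits_map_of_natDegree_dvd_finrank [Finite F] {P : F[X]} (hP : Irreducible P)
    (hdeg : P.natDegree ∣ finrank F K) : (P.map (algebraMap F K)).Splits := by
  have : Finite K := Module.finite_of_finite F
  refine splits_X_pow_nat_card_sub_X.of_dvd
    (FiniteField.X_pow_card_sub_X_ne_zero K Finite.one_lt_card) ?_
  have hdvd := map_dvd (algebraMap F K) (hP.natDegree_dvd_iff_dvd_X_pow_card_pow_sub_X.1 hdeg)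
  simpa [Module.natCard_eq_pow_finrank (K := F) (V := K)] using hdvd

lemma card_minpoly_eq [Finite F] {P : F[X]} (hP : Irreducible P) (hPm : P.Monic)
    (hdeg : P.natDegree ∣ finrank F K) :
    Nat.card {a : K // minpoly F a = P} = P.natDegree := by
  classical
  have hsep : P.Separable := PerfectField.separable_of_irreducible hP
  rw [← card_rootSet_eq_natDegree hsep (splits_map_of_natDegree_dvd_finrank hP hdeg),
    ← Nat.card_eq_fintype_card]
  refine Nat.card_congr (Equiv.subtypeEquivRight fun a ↦ ?_)
  rw [mem_rootSet_of_ne hPm.ne_zero]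
  refine ⟨?_, fun h ↦ (minpoly.eq_of_irreducible_of_monic hP h hPm).symm⟩
  rintro rfl
  exact minpoly.aeval F a

lemma fieldCharpoly_eq_pow_iff {P : F[X]} (hP : Irreducible P) (hPm : P.Monic) {j : ℕ} (hj : j ≠ 0)
    (hdeg : (P ^ j).natDegree = finrank F K) (a : K) :
    fieldCharpoly F a = P ^ j ↔ minpoly F a = P := by
  have ha := Algebra.IsIntegral.isIntegral (R := F) a
  constructor
  · intro h
    have hdvd : P ∣ minpoly F a := hP.prime.dvd_of_dvd_pow (h ▸ dvd_pow_self P hj)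
    exact (eq_of_monic_of_associated hPm (minpoly.monic ha)
      (hP.associated_of_dvd (minpoly.irreducible ha) hdvd)).symm
  · rintro rfl
    rw [fieldCharpoly, ← hdeg, natDegree_pow, Nat.mul_div_cancel _ (minpoly.natDegree_pos ha)]

lemma card_fieldCharpoly_eq [Finite F] {f : F[X]} (hf : f.IsMonicOfDegree (finrank F K)) :
    Nat.card {a : K // fieldCharpoly F a = f} = polyVonMangoldt f := by
  by_cases hpow : IsPrimePow f
  · obtain ⟨P, j, hPm, hP, hj, rfl⟩ := exists_monic_irreducible_pow hf.monic hpow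
    simp only [fieldCharpoly_eq_pow_iff hP hPm hj hf.natDegree_eq, polyVonMangoldt_pow hP hj]
    exact card_minpoly_eq hP hPm ⟨j, by rw [← hf.natDegree_eq, natDegree_pow, mul_comm]⟩
  · rw [polyVonMangoldt_eq_zero hpow, Nat.card_eq_zero]
    refine .inl ⟨fun ⟨a, ha⟩ ↦ hpow (ha ▸ ?_)⟩
    have hint := Algebra.IsIntegral.isIntegral (R := F) a
    refine (minpoly.irreducible hint).prime.isPrimePow.pow ?_
    exact (Nat.div_pos (minpoly.natDegree_le a) (minpoly.natDegree_pos hint)).ne'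

lemma sum_fieldCharpoly [Finite F] [Fintype K] {R : Type*} [CommSemiring R] (χ : F[X] → R) :
    ∑ a : K, χ (fieldCharpoly F a) = vonMangoldtSum χ (finrank F K) := by
  classical
  rw [← Finset.sum_fiberwise_of_maps_to fun a _ ↦
    mem_monicsOfDegree.2 (isMonicOfDegree_fieldCharpoly (F := F) a)]
  refine Finset.sum_congr rfl fun f hf ↦ ?_
  rw [← card_fieldCharpoly_eq (mem_monicsOfDegree.1 hf), Finset.sum_congr rfl fun a ha ↦ by
    rw [(Finset.mem_filter.1 ha).2], Finset.sum_const, nsmul_eq_mul, Nat.card_eq_fintype_card,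
    Fintype.card_subtype]

end FieldCharpoly

section PowerSums

open Finset.HasAntidiagonal (antidiagonal)

variable {R : Type*} [CommRing R] [IsDomain R]

/-- The sum of the `n`-th powers of the roots of `p` in `R`, counted with multiplicity. -/
noncomputable def rootPowerSum (n : ℕ) (p : R[X]) : R :=
  (p.roots.map (· ^ n)).sum

lemma rootPowerSum_mul (n : ℕ) {p q : R[X]} (hpq : p * q ≠ 0) :
    rootPowerSum n (p * q) = rootPowerSum n p + rootPowerSum n q := by
  rw [rootPowerSum, roots_mul hpq, Multiset.map_add, Multiset.sum_add, rootPowerSum, rootPowerSum]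

lemma rootPowerSum_X_pow {n : ℕ} (hn : n ≠ 0) (k : ℕ) : rootPowerSum n (X ^ k : R[X]) = 0 := by
  simp [rootPowerSum, Multiset.map_nsmul, Multiset.sum_nsmul, hn]

lemma reverse_coeff_eq_esymm_roots {p : R[X]} (hp : p.Monic) (hsplits : p.Splits) (k : ℕ) :
    p.reverse.coeff k = (-1) ^ k * p.roots.esymm k := by
  obtain hk | hk := le_or_gt k p.natDegree
  · rw [coeff_reverse, revAt_le hk, coeff_eq_esymm_roots_of_card
      hsplits.natDegree_eq_card_roots.symm (Nat.sub_le _ _), hp.leadingCoeff, one_mul,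
      Nat.sub_sub_self hk]
  · rw [coeff_reverse, revAt_eq_self_of_lt hk, coeff_eq_zero_of_natDegree_lt hk, Multiset.esymm,
      Multiset.powersetCard_eq_empty _ (hsplits.natDegree_eq_card_roots ▸ hk)]
    simp

lemma natCast_mul_esymm {S : Type*} [CommRing S] (s : Multiset S) (n : ℕ) :
    n * s.esymm n = (-1) ^ (n + 1) * ∑ x ∈ antidiagonal n with x.1 < n,
      (-1) ^ x.1 * s.esymm x.1 * (s.map (· ^ x.2)).sum := by
  obtain ⟨l, rfl⟩ : ∃ l : List S, (l : Multiset S) = s := Quot.exists_rep s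
  have hl : (Finset.univ : Finset (Fin l.length)).val.map l.get = l := by simp
  have hesymm (k : ℕ) : MvPolynomial.aeval l.get (MvPolynomial.esymm (Fin l.length) S k) =
      Multiset.esymm (l : Multiset S) k := by
    rw [MvPolynomial.aeval_esymm_eq_multiset_esymm, hl]
  have hpsum (k : ℕ) : MvPolynomial.aeval l.get (MvPolynomial.psum (Fin l.length) S k) =
      (Multiset.map (· ^ k) (l : Multiset S)).sum := by
    simp only [MvPolynomial.psum, map_sum, map_pow, MvPolynomial.aeval_X]
    conv_rhs => rw [← hl, Multiset.map_map]
    rfl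
  have hnewton := congrArg (MvPolynomial.aeval l.get) (MvPolynomial.mul_esymm_eq_sum _ S n)
  simpa only [map_mul, map_natCast, map_pow, map_neg, map_one, map_sum, hesymm, hpsum] using hnewton

lemma natCast_mul_reverse_coeff {p : R[X]} (hp : p.Monic) (hsplits : p.Splits) (n : ℕ) :
    n * p.reverse.coeff n = ∑ x ∈ antidiagonal n with x.1 < n,
      p.reverse.coeff x.1 * -rootPowerSum x.2 p := by
  simp only [reverse_coeff_eq_esymm_roots hp hsplits, mul_neg, Finset.sum_neg_distrib]
  rw [mul_left_comm, natCast_mul_esymm, ← mul_assoc, ← pow_add, Odd.neg_one_pow ⟨n, by lia⟩,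
    neg_one_mul]
  rfl

lemma newton_recursion_unique {S : Type*} [Ring S] {L P P' : ℕ → S} (hL : L 0 = 1)
    (hP : ∀ n : ℕ, n * L n = ∑ x ∈ antidiagonal n with x.1 < n, L x.1 * P x.2)
    (hP' : ∀ n : ℕ, n * L n = ∑ x ∈ antidiagonal n with x.1 < n, L x.1 * P' x.2)
    {n : ℕ} (hn : n ≠ 0) : P n = P' n := by
  induction n using Nat.strong_induction_on with
  | _ n ih =>
    have hmem : (0, n) ∈ {x ∈ antidiagonal n | x.1 < n} := by simp [Nat.pos_of_ne_zero hn]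
    have hsum := (hP n).symm.trans (hP' n)
    rw [← Finset.add_sum_erase _ _ hmem, ← Finset.add_sum_erase _ _ hmem, hL, one_mul, one_mul,
      Finset.sum_congr rfl fun x hx ↦ ?_] at hsum
    · exact add_right_cancel hsum
    · obtain ⟨i, j⟩ := x
      simp only [Finset.mem_erase, Finset.mem_filter, Finset.HasAntidiagonal.mem_antidiagonal,
        ne_eq, Prod.mk.injEq] at hx
      rw [ih j (by lia) (by lia)]

end PowerSums

section ReverseSum

lemma reverse_mul_X_add_C {R : Type*} [Semiring R] {m : ℕ} {f : R[X]} (hf : f.IsMonicOfDegree m)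
    (b : R) : (f * X + C b).reverse = f.reverse + C b * X ^ (m + 1) := by
  nontriviality R
  rw [reverse_add_C, reverse_mul_X, natDegree_mul_X hf.ne_zero, hf.natDegree_eq]

lemma charSum_comp_reverse_zero {F R : Type*} [Field F] [Finite F] [CommSemiring R]
    (φ : F[X] → R) : charSum (φ ∘ reverse) 0 = φ 1 := by
  rw [charSum_zero, Function.comp_apply, ← C_1, reverse_C]

lemma charSum_comp_reverse_succ {F R : Type*} [Field F] [Fintype F] [CommSemiring R]
    (φ : F[X] → R) (m : ℕ) : charSum (φ ∘ reverse) (m + 1) =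
      charSum ((fun g ↦ ∑ b, φ (g + C b * X ^ (m + 1))) ∘ reverse) m := by
  rw [charSum, sum_monicsOfDegree_succ]
  refine Finset.sum_congr rfl fun f hf ↦ Finset.sum_congr rfl fun b _ ↦ ?_
  rw [Function.comp_apply, reverse_mul_X_add_C (mem_monicsOfDegree.1 hf)]

end ReverseSum

section DiscreteLogarithm

/-- The power sums `p₄` modulo `8` and `p₃`, `p₅` modulo `2` of the roots of
`X ^ d - e₁ X ^ (d - 1) + e₂ X ^ (d - 2) - ⋯`, where the integers `eₖ` lift `cₖ`. By Newton's
identities they do not depend on the lifts, which are taken in `{0, 1}`. -/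
def powerSums : ZMod 2 × ZMod 2 × ZMod 2 × ZMod 2 × ZMod 2 → ZMod 8 × ZMod 2 × ZMod 2
  | (c₁, c₂, c₃, c₄, c₅) =>
    ((c₁.val + 2 * c₂.val + 4 * (c₁ * c₂ + c₁ * c₃ + c₄).val : ℕ), c₁ + c₁ * c₂ + c₃,
      c₁ + c₁ * c₃ + c₂ * c₃ + c₁ * c₄ + c₅)

set_option maxRecDepth 10000 in
lemma powerSums_injective : Function.Injective powerSums := by
  unfold Function.Injective
  decide

lemma powerSums_bijective : Function.Bijective powerSums :=
  (Fintype.bijective_iff_injective_and_card _).2 ⟨powerSums_injective, by simp⟩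

set_option maxRecDepth 10000 in
lemma powerSums_mul : ∀ a₁ a₂ a₃ a₄ a₅ b₁ b₂ b₃ b₄ b₅ : ZMod 2,
    powerSums (b₁ + a₁, b₂ + a₁ * b₁ + a₂, b₃ + a₁ * b₂ + a₂ * b₁ + a₃,
      b₄ + a₁ * b₃ + a₂ * b₂ + a₃ * b₁ + a₄,
      b₅ + a₁ * b₄ + a₂ * b₃ + a₃ * b₂ + a₄ * b₁ + a₅) =
      powerSums (a₁, a₂, a₃, a₄, a₅) + powerSums (b₁, b₂, b₃, b₄, b₅) := by
  decide

end DiscreteLogarithm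

section Characters

variable {R : Type*} [CommRing R] {θ ε δ : R}

/-- The character of `ZMod 8 × ZMod 2 × ZMod 2` sending the generators to `θ`, `ε` and `δ`, provided
that `θ ^ 8 = ε ^ 2 = δ ^ 2 = 1`. -/
def tripleChar (θ ε δ : R) (x : ZMod 8 × ZMod 2 × ZMod 2) : R :=
  θ ^ x.1.val * ε ^ x.2.1.val * δ ^ x.2.2.val

lemma tripleChar_add (hθ : θ ^ 8 = 1) (hε : ε ^ 2 = 1) (hδ : δ ^ 2 = 1)
    (x y : ZMod 8 × ZMod 2 × ZMod 2) :
    tripleChar θ ε δ (x + y) = tripleChar θ ε δ x * tripleChar θ ε δ y := by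
  have hpow {n : ℕ} [NeZero n] {z : R} (hz : z ^ n = 1) (a b : ZMod n) :
      z ^ (a + b).val = z ^ a.val * z ^ b.val := by
    simpa only [AddChar.zmodChar_apply] using (AddChar.zmodChar n hz).map_add_eq_mul a b
  simp only [tripleChar, Prod.fst_add, Prod.snd_add, hpow hθ, hpow hε, hpow hδ]
  ring

lemma sum_zmod_two {M : Type*} [AddCommMonoid M] (f : ZMod 2 → M) : ∑ x, f x = f 0 + f 1 :=
  Fin.sum_univ_two f

lemma sum_tripleChar (θ ε δ : R) :
    ∑ x, tripleChar θ ε δ x = (∑ j ∈ Finset.range 8, θ ^ j) * (1 + ε) * (1 + δ) := by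
  have h8 (z : R) : ∑ a : ZMod 8, z ^ a.val = ∑ j ∈ Finset.range 8, z ^ j :=
    Fin.sum_univ_eq_sum_range (z ^ ·) 8
  have h2 (z : R) : ∑ a : ZMod 2, z ^ a.val = 1 + z := by
    rw [sum_zmod_two, ZMod.val_zero, ZMod.val_one, pow_zero, pow_one]
  simp only [tripleChar, Fintype.sum_prod_type, ← Finset.mul_sum, ← Finset.sum_mul, h8, h2]

lemma sum_tripleChar_eq_zero [IsDomain R] (hθ : θ ^ 8 = 1) (hε : ε ^ 2 = 1) (hδ : δ ^ 2 = 1)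
    (h : θ ≠ 1 ∨ ε ≠ 1 ∨ δ ≠ 1) : ∑ x, tripleChar θ ε δ x = 0 := by
  have hgeom {n : ℕ} {z : R} (hz : z ^ n = 1) (h1 : z ≠ 1) : ∑ j ∈ Finset.range n, z ^ j = 0 := by
    refine (mul_eq_zero.1 ?_).resolve_right (sub_ne_zero.2 h1)
    rw [geom_sum_mul, hz, sub_self]
  have hsq {z : R} (hz : z ^ 2 = 1) (h1 : z ≠ 1) : 1 + z = 0 := by
    simpa [Finset.sum_range_succ] using hgeom hz h1
  rw [sum_tripleChar]
  obtain h | h | h := h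
  · simp [hgeom hθ h]
  · simp [hsq hε h]
  · simp [hsq hδ h]

/-- The character `p ↦ θ ^ p₄ * ε ^ p₃ * δ ^ p₅` of the polynomials with constant coefficient `1`
modulo `X ^ 6`. -/
def logChar (θ ε δ : R) (p : (ZMod 2)[X]) : R :=
  tripleChar θ ε δ (powerSums (p.coeff 1, p.coeff 2, p.coeff 3, p.coeff 4, p.coeff 5))

lemma logChar_mul (hθ : θ ^ 8 = 1) (hε : ε ^ 2 = 1) (hδ : δ ^ 2 = 1) {p q : (ZMod 2)[X]}
    (hp : p.coeff 0 = 1) (hq : q.coeff 0 = 1) :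
    logChar θ ε δ (p * q) = logChar θ ε δ p * logChar θ ε δ q := by
  rw [logChar, logChar, logChar, ← tripleChar_add hθ hε hδ, ← powerSums_mul]
  simp [coeff_mul, Finset.Nat.antidiagonal_succ, hp, hq, add_assoc]

lemma charSum_logChar_succ {m : ℕ} (hm : 5 ≤ m) (θ ε δ : R) :
    charSum (logChar θ ε δ ∘ reverse) (m + 1) = 2 * charSum (logChar θ ε δ ∘ reverse) m := by
  rw [charSum_comp_reverse_succ, charSum, charSum, Finset.mul_sum]
  refine Finset.sum_congr rfl fun f _ ↦ ?_
  have hcoeff (b : ZMod 2) {k : ℕ} (hk : k ≤ 5) :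
      (f.reverse + C b * X ^ (m + 1)).coeff k = f.reverse.coeff k := by
    simp [show k ≠ m + 1 by lia]
  simp only [Function.comp_apply, logChar, hcoeff, Finset.sum_const, Finset.card_univ, ZMod.card,
    nsmul_eq_mul, Nat.cast_ofNat, Nat.reduceLeDiff]

lemma charSum_logChar_five (θ ε δ : R) :
    charSum (logChar θ ε δ ∘ reverse) 5 = ∑ x, tripleChar θ ε δ x := by
  rw [← Fintype.sum_bijective powerSums powerSums_bijective _ _ fun _ ↦ rfl]
  simp only [charSum_comp_reverse_succ, charSum_comp_reverse_zero, Fintype.sum_prod_type]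
  simp [logChar, coeff_one]

lemma charSum_logChar_eq_zero [IsDomain R] (hθ : θ ^ 8 = 1) (hε : ε ^ 2 = 1) (hδ : δ ^ 2 = 1)
    (h : θ ≠ 1 ∨ ε ≠ 1 ∨ δ ≠ 1) {m : ℕ} (hm : 5 ≤ m) :
    charSum (logChar θ ε δ ∘ reverse) m = 0 := by
  induction m, hm using Nat.le_induction with
  | base => rw [charSum_logChar_five, sum_tripleChar_eq_zero hθ hε hδ h]
  | succ m hm ih => rw [charSum_logChar_succ hm, ih, mul_zero]

lemma charSum_logChar_one (θ ε δ : R) :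
    charSum (logChar θ ε δ ∘ reverse) 1 = 1 + θ * ε * δ := by
  simp only [charSum_comp_reverse_succ, charSum_comp_reverse_zero]
  simp [logChar, coeff_one, sum_zmod_two, tripleChar, powerSums, CharTwo.add_self_eq_zero,
    ZMod.val_one_eq_one_mod, ZMod.val_natCast, -Nat.cast_add, -Nat.cast_mul, -Nat.cast_ofNat,
    -ZMod.natCast_val]

lemma charSum_logChar_two (θ ε δ : R) :
    charSum (logChar θ ε δ ∘ reverse) 2 = 1 + θ ^ 2 + θ * ε * δ + θ ^ 7 * δ := by
  simp only [charSum_comp_reverse_succ, charSum_comp_reverse_zero]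
  simp only [logChar, tripleChar, powerSums, zero_add, pow_one, Nat.reduceAdd, coeff_add, coeff_one,
    one_ne_zero, ↓reduceIte, coeff_mul_X, coeff_C_zero, coeff_C_mul, coeff_X_pow,
    OfNat.one_ne_ofNat, mul_zero, add_zero, OfNat.ofNat_ne_zero, coeff_C_succ,
    CharTwo.add_self_eq_zero, mul_one, Nat.reduceEqDiff, Nat.succ_ne_self, ZMod.val_natCast,
    sum_zmod_two, ZMod.val_zero, pow_zero, ZMod.val_one_eq_one_mod, Nat.mod_succ,
    Nat.zero_mod, Nat.reduceMod, Nat.one_mod]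
  ring

lemma charSum_logChar_three (θ ε δ : R) :
    charSum (logChar θ ε δ ∘ reverse) 3 =
      1 + θ ^ 2 + θ * ε * δ + θ ^ 7 * δ + ε + θ ^ 5 + θ ^ 2 * ε * δ + θ ^ 3 * ε * δ := by
  simp only [charSum_comp_reverse_succ, charSum_comp_reverse_zero]
  simp only [logChar, tripleChar, powerSums, zero_add, pow_one, Nat.reduceAdd, coeff_add, coeff_one,
    one_ne_zero, ↓reduceIte, coeff_mul_X, coeff_C_zero, coeff_C_mul, coeff_X_pow,
    OfNat.one_ne_ofNat, mul_zero, add_zero, OfNat.ofNat_ne_zero, coeff_C_succ,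
    CharTwo.add_self_eq_zero, mul_one, Nat.reduceEqDiff, Nat.succ_ne_self, ZMod.val_natCast,
    sum_zmod_two, ZMod.val_zero, pow_zero, ZMod.val_one_eq_one_mod, Nat.mod_succ,
    Nat.zero_mod, Nat.reduceMod, Nat.one_mod]
  ring

lemma charSum_logChar_four (θ ε δ : R) :
    charSum (logChar θ ε δ ∘ reverse) 4 =
      (1 + θ ^ 2 + ε + θ ^ 2 * ε * δ) * (1 + θ ^ 4) + θ * ε * δ + θ * δ + θ ^ 3 + θ ^ 3 * ε * δ +
        θ ^ 5 + θ ^ 5 * ε + θ ^ 7 * ε + θ ^ 7 * δ := by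
  simp only [charSum_comp_reverse_succ, charSum_comp_reverse_zero]
  simp only [logChar, tripleChar, powerSums, zero_add, pow_one, Nat.reduceAdd, coeff_add, coeff_one,
    one_ne_zero, ↓reduceIte, coeff_mul_X, coeff_C_zero, coeff_C_mul, coeff_X_pow,
    OfNat.one_ne_ofNat, mul_zero, add_zero, OfNat.ofNat_ne_zero, coeff_C_succ,
    CharTwo.add_self_eq_zero, mul_one, Nat.reduceEqDiff, Nat.succ_ne_self, ZMod.val_natCast,
    sum_zmod_two, ZMod.val_zero, pow_zero, ZMod.val_one_eq_one_mod, Nat.mod_succ,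
    Nat.zero_mod, Nat.reduceMod, Nat.one_mod]
  ring

end Characters

section LPolynomials

variable {R : Type*} [CommRing R] {θ ε δ : R}

/-- The reciprocal polynomial of the `L`-function of `logChar θ ε δ ∘ reverse`, a polynomial of
degree at most `4` unless `θ = ε = δ = 1`. -/
noncomputable def lPoly (θ ε δ : R) : R[X] :=
  X ^ 4 + C (charSum (logChar θ ε δ ∘ reverse) 1) * X ^ 3 +
    C (charSum (logChar θ ε δ ∘ reverse) 2) * X ^ 2 + C (charSum (logChar θ ε δ ∘ reverse) 3) * X +
    C (charSum (logChar θ ε δ ∘ reverse) 4)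

lemma monic_lPoly (θ ε δ : R) : (lPoly θ ε δ).Monic := by
  unfold lPoly
  monicity!

lemma natDegree_lPoly [Nontrivial R] (θ ε δ : R) : (lPoly θ ε δ).natDegree = 4 := by
  unfold lPoly
  compute_degree!

lemma logChar_one (θ ε δ : R) : logChar θ ε δ 1 = 1 := by
  simp [logChar, tripleChar, powerSums, coeff_one]

lemma reverse_lPoly_coeff [IsDomain R] (hθ : θ ^ 8 = 1) (hε : ε ^ 2 = 1) (hδ : δ ^ 2 = 1)
    (h : θ ≠ 1 ∨ ε ≠ 1 ∨ δ ≠ 1) (m : ℕ) :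
    (lPoly θ ε δ).reverse.coeff m = charSum (logChar θ ε δ ∘ reverse) m := by
  rw [coeff_reverse, natDegree_lPoly]
  obtain hm | hm := lt_or_ge m 5
  · rw [revAt_le (by lia)]
    interval_cases m <;>
      simp [lPoly, coeff_X, coeff_C, charSum_comp_reverse_zero, logChar_one]
  · rw [revAt_eq_self_of_lt (by lia), charSum_logChar_eq_zero hθ hε hδ h hm,
      coeff_eq_zero_of_natDegree_lt (by rw [natDegree_lPoly]; lia)]

lemma natCast_mul_charSum_logChar [IsDomain R] (hθ : θ ^ 8 = 1) (hε : ε ^ 2 = 1) (hδ : δ ^ 2 = 1)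
    (n : ℕ) : n * charSum (logChar θ ε δ ∘ reverse) n =
      ∑ x ∈ Finset.HasAntidiagonal.antidiagonal n with x.1 < n,
        charSum (logChar θ ε δ ∘ reverse) x.1 * vonMangoldtSum (logChar θ ε δ ∘ reverse) x.2 := by
  rw [natCast_mul_charSum, Finset.sum_filter_of_ne]
  · intro x hx hne
    contrapose! hne
    rw [Finset.HasAntidiagonal.mem_antidiagonal] at hx
    rw [show x.2 = 0 by lia, vonMangoldtSum_zero, mul_zero]
  · intro f g hf hg
    simp only [Function.comp_apply, reverse_mul_of_domain]
    exact logChar_mul hθ hε hδ (by simp [hf]) (by simp [hg])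

lemma vonMangoldtSum_logChar [IsDomain R] (hθ : θ ^ 8 = 1) (hε : ε ^ 2 = 1) (hδ : δ ^ 2 = 1)
    (h : θ ≠ 1 ∨ ε ≠ 1 ∨ δ ≠ 1) (hsplits : (lPoly θ ε δ).Splits) {n : ℕ} (hn : n ≠ 0) :
    vonMangoldtSum (logChar θ ε δ ∘ reverse) n = -rootPowerSum n (lPoly θ ε δ) := by
  refine newton_recursion_unique (P' := fun n ↦ -rootPowerSum n (lPoly θ ε δ)) ?_
    (natCast_mul_charSum_logChar hθ hε hδ) (fun m ↦ ?_) hn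
  · rw [charSum_comp_reverse_zero, logChar_one]
  · simp only [← reverse_lPoly_coeff hθ hε hδ h]
    exact natCast_mul_reverse_coeff (monic_lPoly θ ε δ) hsplits m

end LPolynomials

section LPolynomialNorms

variable {R : Type*} [CommRing R]

/-- The part of `lPoly θ ε δ` of even degree in `θ`, as a polynomial in `φ = θ ^ 2`. -/
noncomputable def lPolyEven (φ ε δ : R) : R[X] :=
  X ^ 4 + X ^ 3 + C (1 + φ) * X ^ 2 + C (1 + φ + ε + φ * ε * δ) * X +
    C ((1 + φ + ε + φ * ε * δ) * (1 + φ ^ 2))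

/-- The part of `lPoly θ ε δ` of odd degree in `θ`, divided by `θ`, as a polynomial in
`φ = θ ^ 2`. -/
noncomputable def lPolyOdd (φ ε δ : R) : R[X] :=
  C (ε * δ) * X ^ 3 + C (ε * δ + φ ^ 3 * δ) * X ^ 2 +
    C (ε * δ + φ ^ 3 * δ + φ ^ 2 + φ * ε * δ) * X +
    C (ε * δ + δ + φ * (1 + ε * δ) + φ ^ 2 * (1 + ε) + φ ^ 3 * (ε + δ))

lemma lPoly_eq_even_add_odd (θ ε δ : R) :
    lPoly θ ε δ = lPolyEven (θ ^ 2) ε δ + C θ * lPolyOdd (θ ^ 2) ε δ := by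
  simp only [lPoly, lPolyEven, lPolyOdd, charSum_logChar_one, charSum_logChar_two,
    charSum_logChar_three, charSum_logChar_four, map_add, map_mul, map_pow, map_one]
  ring

/-- The norm `lPoly θ ε δ * lPoly (-θ) ε δ`, as a polynomial in `φ = θ ^ 2`. -/
noncomputable def lPolyNorm (φ ε δ : R) : R[X] :=
  lPolyEven φ ε δ ^ 2 - C φ * lPolyOdd φ ε δ ^ 2

lemma lPoly_mul_lPoly_neg (θ ε δ : R) :
    lPoly θ ε δ * lPoly (-θ) ε δ = lPolyNorm (θ ^ 2) ε δ := by
  simp only [lPoly_eq_even_add_odd, lPolyNorm, neg_sq, map_neg, map_pow]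
  ring

lemma lPoly_neg_one_mul_lPolyNorm_neg_one :
    lPoly (-1 : R) 1 1 * lPolyNorm (-1) 1 1 = (d21 * X ^ 10).map (Int.castRingHom R) := by
  simp only [lPoly_eq_even_add_odd, lPolyNorm, lPolyEven, lPolyOdd, d21, map_add,
    map_mul, map_neg, map_pow, map_one, Polynomial.map_add, Polynomial.map_mul,
    Polynomial.map_pow, Polynomial.map_ofNat, map_X]
  ring

lemma lPolyNorm_one_mul_lPolyNorm_neg_one_one_neg_one :
    lPolyNorm (1 : R) 1 (-1) * lPolyNorm (-1) 1 (-1) =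
      (d21 * d22 * d21 * d23 * d21 * d23 * d41).map (Int.castRingHom R) := by
  simp only [lPolyNorm, lPolyEven, lPolyOdd, d21, d22, d23, d41, map_add,
    map_mul, map_neg, map_pow, map_one, Polynomial.map_add, Polynomial.map_mul,
    Polynomial.map_pow, Polynomial.map_ofNat, map_X, Polynomial.map_sub]
  ring

lemma lPolyNorm_one_mul_lPolyNorm_neg_one_neg_one_one :
    lPolyNorm (1 : R) (-1) 1 * lPolyNorm (-1) (-1) 1 =
      (d21 * d22 * d41 * X ^ 8).map (Int.castRingHom R) := by
  simp only [lPolyNorm, lPolyEven, lPolyOdd, d21, d22, d41, map_add,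
    map_mul, map_neg, map_pow, map_one, Polynomial.map_add, Polynomial.map_mul,
    Polynomial.map_pow, Polynomial.map_ofNat, map_X]
  ring

lemma lPolyNorm_one_mul_lPolyNorm_neg_one_neg_one_neg_one :
    lPolyNorm (1 : R) (-1) (-1) * lPolyNorm (-1) (-1) (-1) =
      (d41 * d42 * d83).map (Int.castRingHom R) := by
  simp only [lPolyNorm, lPolyEven, lPolyOdd, d41, d42, d83, map_add,
    map_mul, map_neg, map_pow, map_one, Polynomial.map_add, Polynomial.map_mul,
    Polynomial.map_pow, Polynomial.map_ofNat, map_X, Polynomial.map_sub]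
  ring

lemma lPolyNorm_mul_lPolyNorm_neg_one_one {φ : R} (hφ : φ ^ 2 = -1) :
    lPolyNorm φ 1 1 * lPolyNorm (-φ) 1 1 =
      (d22 * d22 * d81 * X ^ 4).map (Int.castRingHom R) := by
  have hC : (C φ : R[X]) ^ 2 = -1 := by rw [← C_pow, hφ, C_neg, C_1]
  simp only [lPolyNorm, lPolyEven, lPolyOdd, d22, d81, map_add,
    map_mul, map_neg, map_pow, map_one, Polynomial.map_add, Polynomial.map_mul,
    Polynomial.map_pow, Polynomial.map_ofNat, map_X]
  grind

lemma lPolyNorm_mul_lPolyNorm_neg_one_neg_one {φ : R} (hφ : φ ^ 2 = -1) :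
    lPolyNorm φ 1 (-1) * lPolyNorm (-φ) 1 (-1) =
      (d41 * d41 * d84).map (Int.castRingHom R) := by
  have hC : (C φ : R[X]) ^ 2 = -1 := by rw [← C_pow, hφ, C_neg, C_1]
  simp only [lPolyNorm, lPolyEven, lPolyOdd, d41, d84, map_add,
    map_mul, map_neg, map_pow, map_one, Polynomial.map_add, Polynomial.map_mul,
    Polynomial.map_pow, Polynomial.map_ofNat, map_X, Polynomial.map_sub]
  grind

lemma lPolyNorm_mul_lPolyNorm_neg_neg_one_one {φ : R} (hφ : φ ^ 2 = -1) :
    lPolyNorm φ (-1) 1 * lPolyNorm (-φ) (-1) 1 =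
      (d21 * d21 * d82 * X ^ 4).map (Int.castRingHom R) := by
  have hC : (C φ : R[X]) ^ 2 = -1 := by rw [← C_pow, hφ, C_neg, C_1]
  simp only [lPolyNorm, lPolyEven, lPolyOdd, d21, d82, map_add,
    map_mul, map_neg, map_pow, map_one, Polynomial.map_add, Polynomial.map_mul,
    Polynomial.map_pow, Polynomial.map_ofNat, map_X]
  grind

lemma lPolyNorm_mul_lPolyNorm_neg_neg_one_neg_one {φ : R} (hφ : φ ^ 2 = -1) :
    lPolyNorm φ (-1) (-1) * lPolyNorm (-φ) (-1) (-1) =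
      (d42 * d42 * d81).map (Int.castRingHom R) := by
  have hC : (C φ : R[X]) ^ 2 = -1 := by rw [← C_pow, hφ, C_neg, C_1]
  simp only [lPolyNorm, lPolyEven, lPolyOdd, d42, d81, map_add,
    map_mul, map_neg, map_pow, map_one, Polynomial.map_add, Polynomial.map_mul,
    Polynomial.map_pow, Polynomial.map_ofNat, map_X]
  grind

end LPolynomialNorms

section PowerSumsOfIntegralPolynomials

lemma rootPowerSum_add_of_mul_eq_map (n : ℕ) {A B : ℂ[X]} {p : ℤ[X]} (hp : p ≠ 0)
    (h : A * B = p.map (Int.castRingHom ℂ)) : rootPowerSum n A + rootPowerSum n B = rho n p := by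
  have hne : p.map (Int.castRingHom ℂ) ≠ 0 :=
    (Polynomial.map_ne_zero_iff (RingHom.injective_int _)).2 hp
  rw [← rootPowerSum_mul n (h ▸ hne), h]
  rfl

lemma rho_mul (n : ℕ) {p q : ℤ[X]} (hp : p ≠ 0) (hq : q ≠ 0) :
    rho n (p * q) = rho n p + rho n q :=
  (rootPowerSum_add_of_mul_eq_map n (mul_ne_zero hp hq) (Polynomial.map_mul _).symm).symm

lemma rho_X_pow {n : ℕ} (hn : n ≠ 0) (k : ℕ) : rho n (X ^ k) = 0 := by
  rw [rho, Polynomial.map_pow, map_X]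
  exact rootPowerSum_X_pow hn k

lemma d21_ne_zero : d21 ≠ 0 := Monic.ne_zero (by unfold d21; monicity!)

lemma d22_ne_zero : d22 ≠ 0 := Monic.ne_zero (by unfold d22; monicity!)

lemma d23_ne_zero : d23 ≠ 0 := Monic.ne_zero (by unfold d23; monicity!)

lemma d41_ne_zero : d41 ≠ 0 := Monic.ne_zero (by unfold d41; monicity!)

lemma d42_ne_zero : d42 ≠ 0 := Monic.ne_zero (by unfold d42; monicity!)

lemma d81_ne_zero : d81 ≠ 0 := Monic.ne_zero (by unfold d81; monicity!)

lemma d82_ne_zero : d82 ≠ 0 := Monic.ne_zero (by unfold d82; monicity!)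

lemma d83_ne_zero : d83 ≠ 0 := Monic.ne_zero (by unfold d83; monicity!)

lemma d84_ne_zero : d84 ≠ 0 := Monic.ne_zero (by unfold d84; monicity!)

end PowerSumsOfIntegralPolynomials

section Orthogonality

variable {R : Type*} [CommRing R] [IsDomain R]

lemma sum_range_primitiveRoot_pow_val {n : ℕ} [NeZero n] {ζ : R} (hζ : IsPrimitiveRoot ζ n)
    (a : ZMod n) : ∑ j ∈ Finset.range n, (ζ ^ j) ^ a.val = if a = 0 then (n : R) else 0 := by
  simp only [pow_right_comm ζ _ a.val]
  split_ifs with ha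
  · simp [ha]
  · have h1 : ζ ^ a.val ≠ 1 := by
      rwa [Ne, hζ.pow_eq_one_iff_dvd, ← ZMod.natCast_eq_zero_iff, ZMod.natCast_zmod_val]
    refine (mul_eq_zero.1 ?_).resolve_right (sub_ne_zero.2 h1)
    rw [geom_sum_mul, ← pow_mul, mul_comm, pow_mul, hζ.pow_eq_one, one_pow, sub_self]

lemma pow_four_eq_neg_one {ζ : R} (hζ : IsPrimitiveRoot ζ 8) : ζ ^ 4 = -1 :=
  (hζ.pow (by norm_num) (by norm_num)).eq_neg_one_of_two_right

lemma sum_sum_sum_tripleChar {ζ : R} (hζ : IsPrimitiveRoot ζ 8)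
    (x : ZMod 8 × ZMod 2 × ZMod 2) :
    ∑ k ∈ Finset.range 2, ∑ l ∈ Finset.range 2, ∑ j ∈ Finset.range 8,
      tripleChar (ζ ^ j) ((-1) ^ k) ((-1) ^ l) x = if x = 0 then 32 else 0 := by
  have hneg : IsPrimitiveRoot (-1 : R) 2 :=
    pow_four_eq_neg_one hζ ▸ hζ.pow (by norm_num) (by norm_num)
  simp only [tripleChar, ← Finset.mul_sum, ← Finset.sum_mul, sum_range_primitiveRoot_pow_val hζ,
    sum_range_primitiveRoot_pow_val hneg]
  obtain ⟨x₁, x₂, x₃⟩ := x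
  by_cases h₁ : x₁ = 0 <;> by_cases h₂ : x₂ = 0 <;> by_cases h₃ : x₃ = 0 <;>
    simp [h₁, h₂, h₃]
  norm_num

end Orthogonality

section Traces

variable {K : Type*} [Field K] [Fintype K] [Algebra (ZMod 2) K] {n : ℕ}

lemma finrank_zmod_two (hK : Fintype.card K = 2 ^ n) : Module.finrank (ZMod 2) K = n := by
  rw [Module.card_eq_pow_finrank (K := ZMod 2), ZMod.card] at hK
  exact Nat.pow_right_injective le_rfl hK

lemma traceFn_eq (hK : Fintype.card K = 2 ^ n) (k : ℕ) (a : K) :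
    traceFn 2 n k a = algebraMap (ZMod 2) K ((fieldCharpoly (ZMod 2) a).reverse.coeff k) := by
  have hdeg := isMonicOfDegree_fieldCharpoly (F := ZMod 2) a
  have hrank := finrank_zmod_two hK
  have : CharP K 2 := charP_of_injective_algebraMap (algebraMap (ZMod 2) K).injective 2
  rw [coeff_reverse, hdeg.natDegree_eq]
  obtain hk | hk := le_or_gt k n
  · have hcoeff := sum_powersetCard_eq_coeff_fieldCharpoly (F := ZMod 2) a (hrank.symm ▸ hk)
    rw [ZMod.card, CharTwo.neg_eq, one_pow, one_mul, hrank] at hcoeff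
    rw [hrank, revAt_le hk, ← hcoeff, traceFn]
  · have hcoeff : (fieldCharpoly (ZMod 2) a).coeff k = 0 :=
      coeff_eq_zero_of_natDegree_lt (by rwa [hdeg.natDegree_eq, hrank])
    rw [revAt_eq_self_of_lt (hrank.symm ▸ hk), hcoeff, map_zero, traceFn,
      Finset.powersetCard_eq_empty.2 (by simpa using hk), Finset.sum_empty]

/-- `powerSums` of the values at `a` of the first five trace functions. -/
noncomputable def tracePowerSums (a : K) : ZMod 8 × ZMod 2 × ZMod 2 :=
  powerSums ((fieldCharpoly (ZMod 2) a).reverse.coeff 1,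
    (fieldCharpoly (ZMod 2) a).reverse.coeff 2, (fieldCharpoly (ZMod 2) a).reverse.coeff 3,
    (fieldCharpoly (ZMod 2) a).reverse.coeff 4, (fieldCharpoly (ZMod 2) a).reverse.coeff 5)

end Traces

section Counting

variable {K : Type} [Field K] [Fintype K] [Algebra (ZMod 2) K] {n : ℕ}

lemma cnt5_eq_card (hK : Fintype.card K = 2 ^ n) (s t : ZMod 2) :
    cnt5 n K 0 0 0 (algebraMap (ZMod 2) K s) (algebraMap (ZMod 2) K t) =
      Fintype.card {a : K // tracePowerSums a = powerSums (0, 0, 0, s, t)} := by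
  rw [cnt5, ← Nat.card_eq_fintype_card]
  refine Nat.card_congr (Equiv.subtypeEquivRight fun a ↦ ?_)
  rw [tracePowerSums, powerSums_injective.eq_iff, ← map_zero (algebraMap (ZMod 2) K)]
  simp only [traceFn_eq hK, (algebraMap (ZMod 2) K).injective.eq_iff, Prod.mk.injEq]

lemma add_powerSums_eq_zero_iff : ∀ (s t : ZMod 2) (x : ZMod 8 × ZMod 2 × ZMod 2),
    x + powerSums (0, 0, 0, s, t) = 0 ↔ x = powerSums (0, 0, 0, s, t) := by
  decide

lemma tripleChar_powerSums {R : Type*} [CommRing R] (θ ε δ : R) (s t : ZMod 2) :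
    tripleChar θ ε δ (powerSums (0, 0, 0, s, t)) = (θ ^ 4) ^ s.val * δ ^ t.val := by
  have h1 : ∀ s : ZMod 2, (powerSums (0, 0, 0, s, t)).1.val = 4 * s.val := by decide +revert
  simp only [tripleChar, h1, pow_mul]
  simp [powerSums]

lemma mul_cnt5 (hK : Fintype.card K = 2 ^ n) {ζ : ℂ} (hζ : IsPrimitiveRoot ζ 8) (s t : ZMod 2) :
    (32 * cnt5 n K 0 0 0 (algebraMap (ZMod 2) K s) (algebraMap (ZMod 2) K t) : ℂ) =
      ∑ k ∈ Finset.range 2, ∑ l ∈ Finset.range 2, ((-1) ^ l) ^ t.val *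
        ∑ j ∈ Finset.range 8, ((ζ ^ j) ^ 4) ^ s.val *
          vonMangoldtSum (logChar (ζ ^ j) ((-1) ^ k) ((-1) ^ l) ∘ reverse) n := by
  have hθ (j : ℕ) : (ζ ^ j) ^ 8 = 1 := by rw [pow_right_comm, hζ.pow_eq_one, one_pow]
  have hsq (k : ℕ) : ((-1 : ℂ) ^ k) ^ 2 = 1 := by rw [pow_right_comm, neg_one_sq, one_pow]
  calc (32 * cnt5 n K 0 0 0 (algebraMap (ZMod 2) K s) (algebraMap (ZMod 2) K t) : ℂ)
      = ∑ a : K, if tracePowerSums a + powerSums (0, 0, 0, s, t) = 0 then 32 else 0 := by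
        simp only [add_powerSums_eq_zero_iff, ← Finset.sum_filter, Finset.sum_const, nsmul_eq_mul,
          cnt5_eq_card hK, Fintype.card_subtype, mul_comm]
    _ = ∑ a : K, ∑ k ∈ Finset.range 2, ∑ l ∈ Finset.range 2, ((-1) ^ l) ^ t.val *
          ∑ j ∈ Finset.range 8, ((ζ ^ j) ^ 4) ^ s.val *
            tripleChar (ζ ^ j) ((-1) ^ k) ((-1) ^ l) (tracePowerSums a) := by
        simp only [← sum_sum_sum_tripleChar hζ, tripleChar_add (hθ _) (hsq _) (hsq _),
          tripleChar_powerSums, Finset.mul_sum, mul_comm, mul_assoc]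
    _ = _ := by
        simp only [← finrank_zmod_two hK, ← sum_fieldCharpoly (K := K), Finset.mul_sum]
        rw [Finset.sum_comm]
        refine Finset.sum_congr rfl fun k _ ↦ ?_
        rw [Finset.sum_comm]
        refine Finset.sum_congr rfl fun l _ ↦ ?_
        exact Finset.sum_comm

end Counting

section OrbitSums

lemma sum_range_eight_pow_mul {R : Type*} [CommRing R] {ζ : R} (hζ : ζ ^ 4 = -1) (s : ℕ)
    (f : R → R) : ∑ j ∈ Finset.range 8, ((ζ ^ j) ^ 4) ^ s * f (ζ ^ j) =
      f 1 + f (-1) + (f (ζ ^ 2) + f (-ζ ^ 2)) +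
        (-1) ^ s * (f ζ + f (-ζ) + (f (ζ ^ 3) + f (-ζ ^ 3))) := by
  have hpow (k : ℕ) : ζ ^ (k + 4) = -ζ ^ k := by rw [pow_add, hζ, mul_neg_one]
  simp only [pow_right_comm ζ _ 4, hζ, Finset.sum_range_succ, Finset.sum_range_zero, zero_add,
    hpow 1, hpow 2, hpow 3, pow_zero, pow_one, one_pow, one_mul,
    Even.neg_one_pow (show Even 2 by decide), Odd.neg_one_pow (show Odd 3 by decide),
    Even.neg_one_pow (show Even 4 by decide), Odd.neg_one_pow (show Odd 5 by decide),
    Even.neg_one_pow (show Even 6 by decide), Odd.neg_one_pow (show Odd 7 by decide)]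
  ring

variable {n : ℕ} {θ ε δ ζ : ℂ}

lemma vonMangoldtSum_logChar_add_neg (hn : n ≠ 0) (hθ : θ ^ 8 = 1) (hε : ε ^ 2 = 1)
    (hδ : δ ^ 2 = 1) (h : θ ^ 2 ≠ 1 ∨ ε ≠ 1 ∨ δ ≠ 1) :
    vonMangoldtSum (logChar θ ε δ ∘ reverse) n + vonMangoldtSum (logChar (-θ) ε δ ∘ reverse) n =
      -rootPowerSum n (lPolyNorm (θ ^ 2) ε δ) := by
  have hpos : θ ≠ 1 ∨ ε ≠ 1 ∨ δ ≠ 1 := h.imp_left fun h1 h2 ↦ h1 (by rw [h2, one_pow])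
  have hneg : -θ ≠ 1 ∨ ε ≠ 1 ∨ δ ≠ 1 :=
    h.imp_left fun h1 h2 ↦ h1 (by rw [← neg_sq, h2, one_pow])
  have hne := ((monic_lPoly θ ε δ).mul (monic_lPoly (-θ) ε δ)).ne_zero
  rw [vonMangoldtSum_logChar hθ hε hδ hpos (IsAlgClosed.splits _) hn,
    vonMangoldtSum_logChar (by rw [Even.neg_pow (by decide), hθ]) hε hδ hneg
      (IsAlgClosed.splits _) hn, ← neg_add, ← rootPowerSum_mul n hne, lPoly_mul_lPoly_neg]

lemma vonMangoldtSum_logChar_primitive_orbit (hn : n ≠ 0) (hζ : ζ ^ 4 = -1) (hε : ε ^ 2 = 1)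
    (hδ : δ ^ 2 = 1) {q : ℤ[X]} (hq : q ≠ 0)
    (hnorm : lPolyNorm (ζ ^ 2) ε δ * lPolyNorm (-ζ ^ 2) ε δ = q.map (Int.castRingHom ℂ)) :
    vonMangoldtSum (logChar ζ ε δ ∘ reverse) n + vonMangoldtSum (logChar (-ζ) ε δ ∘ reverse) n +
      (vonMangoldtSum (logChar (ζ ^ 3) ε δ ∘ reverse) n +
        vonMangoldtSum (logChar (-ζ ^ 3) ε δ ∘ reverse) n) = -rho n q := by
  have h8 : ζ ^ 8 = 1 := by linear_combination (ζ ^ 4 - 1) * hζ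
  have h6 : (ζ ^ 3) ^ 2 = -ζ ^ 2 := by linear_combination ζ ^ 2 * hζ
  have hne : ζ ^ 2 ≠ 1 := fun h ↦ by norm_num [show ζ ^ 4 = (ζ ^ 2) ^ 2 by ring, h] at hζ
  have hne' : (ζ ^ 3) ^ 2 ≠ 1 := by
    rw [h6]
    exact fun h ↦ by norm_num [show ζ ^ 4 = (-ζ ^ 2) ^ 2 by ring, h] at hζ
  rw [vonMangoldtSum_logChar_add_neg hn h8 hε hδ (.inl hne), vonMangoldtSum_logChar_add_neg hn
    (by rw [pow_right_comm, h8, one_pow]) hε hδ (.inl hne'), h6, ← neg_add,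
    rootPowerSum_add_of_mul_eq_map n hq hnorm]

lemma sum_vonMangoldtSum_logChar (hn : n ≠ 0) (hζ : ζ ^ 4 = -1) (hε : ε ^ 2 = 1)
    (hδ : δ ^ 2 = 1) (h : ε ≠ 1 ∨ δ ≠ 1) {p q : ℤ[X]} (hp : p ≠ 0) (hq : q ≠ 0)
    (hpnorm : lPolyNorm 1 ε δ * lPolyNorm (-1) ε δ = p.map (Int.castRingHom ℂ))
    (hqnorm : lPolyNorm (ζ ^ 2) ε δ * lPolyNorm (-ζ ^ 2) ε δ = q.map (Int.castRingHom ℂ))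
    (s : ℕ) :
    ∑ j ∈ Finset.range 8, ((ζ ^ j) ^ 4) ^ s * vonMangoldtSum (logChar (ζ ^ j) ε δ ∘ reverse) n =
      -(rho n p + (-1) ^ s * rho n q) := by
  have h16 : (ζ ^ 2) ^ 8 = 1 := by rw [← pow_mul, pow_mul ζ 4 4, hζ, Even.neg_one_pow (by decide)]
  have hone := vonMangoldtSum_logChar_add_neg hn (one_pow 8) hε hδ (.inr h)
  have hI := vonMangoldtSum_logChar_add_neg hn h16 hε hδ (.inr h)
  have hprim := vonMangoldtSum_logChar_primitive_orbit hn hζ hε hδ hq hqnorm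
  rw [one_pow] at hone
  rw [← pow_mul, hζ] at hI
  rw [sum_range_eight_pow_mul hζ s fun θ ↦ vonMangoldtSum (logChar θ ε δ ∘ reverse) n, hone, hI,
    hprim, ← neg_add, rootPowerSum_add_of_mul_eq_map n hp hpnorm]
  ring

lemma vonMangoldtSum_logChar_one_one_one {K : Type*} [Field K] [Fintype K] [Algebra (ZMod 2) K]
    (hK : Fintype.card K = 2 ^ n) :
    vonMangoldtSum (logChar (1 : ℂ) 1 1 ∘ reverse) n = 2 ^ n := by
  rw [← finrank_zmod_two hK, ← sum_fieldCharpoly (K := K), finrank_zmod_two hK]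
  simp [logChar, tripleChar, hK]

lemma sum_vonMangoldtSum_logChar_one_one {K : Type*} [Field K] [Fintype K] [Algebra (ZMod 2) K]
    (hK : Fintype.card K = 2 ^ n) (hn : n ≠ 0) (hζ : ζ ^ 4 = -1) (s : ℕ) :
    ∑ j ∈ Finset.range 8, ((ζ ^ j) ^ 4) ^ s * vonMangoldtSum (logChar (ζ ^ j) 1 1 ∘ reverse) n =
      2 ^ n - (rho n d21 + (-1) ^ s * rho n (d22 * d22 * d81 * X ^ 4)) := by
  have h2 : (ζ ^ 2) ^ 2 = -1 := by rw [← pow_mul, hζ]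
  have h16 : (ζ ^ 2) ^ 8 = 1 := by rw [← pow_mul, pow_mul ζ 4 4, hζ, Even.neg_one_pow (by decide)]
  have hneg := vonMangoldtSum_logChar (θ := (-1 : ℂ)) (Even.neg_one_pow (by decide)) (one_pow 2)
    (one_pow 2) (.inl (by norm_num)) (IsAlgClosed.splits _) hn
  have hI := vonMangoldtSum_logChar_add_neg hn h16 (one_pow 2) (one_pow 2)
    (.inl (by rw [h2]; norm_num))
  have hprim := vonMangoldtSum_logChar_primitive_orbit hn hζ (one_pow 2) (one_pow 2)
    (by simp [d22_ne_zero, d81_ne_zero])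
    (lPolyNorm_mul_lPolyNorm_neg_one_one h2)
  have hd21 := rootPowerSum_add_of_mul_eq_map n (by simp [d21_ne_zero])
    lPoly_neg_one_mul_lPolyNorm_neg_one
  rw [rho_mul n d21_ne_zero (pow_ne_zero _ X_ne_zero), rho_X_pow hn, add_zero] at hd21
  rw [sum_range_eight_pow_mul hζ s fun θ ↦ vonMangoldtSum (logChar θ 1 1 ∘ reverse) n, hneg, hI,
    hprim, vonMangoldtSum_logChar_one_one_one hK, h2, ← hd21]
  ring

lemma mul_cnt5_eq {K : Type} [Field K] [Fintype K] [Algebra (ZMod 2) K]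
    (hK : Fintype.card K = 2 ^ n) (hn : n ≠ 0) (s t : ZMod 2) :
    (32 * cnt5 n K 0 0 0 (algebraMap (ZMod 2) K s) (algebraMap (ZMod 2) K t) : ℂ) =
      2 ^ n - (rho n d21 + (-1) ^ s.val * (2 * rho n d22 + rho n d81))
        - (-1) ^ t.val * (3 * rho n d21 + rho n d22 + 2 * rho n d23 + rho n d41 +
          (-1) ^ s.val * (2 * rho n d41 + rho n d84))
        - (rho n d21 + rho n d22 + rho n d41 + (-1) ^ s.val * (2 * rho n d21 + rho n d82))
        - (-1) ^ t.val * (rho n d41 + rho n d42 + rho n d83 +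
          (-1) ^ s.val * (2 * rho n d42 + rho n d81)) := by
  have hζ := Complex.isPrimitiveRoot_exp 8 (by norm_num)
  generalize Complex.exp (2 * Real.pi * Complex.I / (8 : ℕ)) = ζ at hζ
  have h4 := pow_four_eq_neg_one hζ
  have h2 : (ζ ^ 2) ^ 2 = -1 := by rw [← pow_mul, h4]
  have hne : (-1 : ℂ) ≠ 1 := by norm_num
  simp only [mul_cnt5 hK hζ, Finset.sum_range_succ _ 1, Finset.sum_range_one, pow_zero,
    pow_one, one_pow, one_mul]
  rw [sum_vonMangoldtSum_logChar_one_one hK hn h4,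
    sum_vonMangoldtSum_logChar hn h4 (one_pow 2) neg_one_sq (.inr hne)
      (by simp [d21_ne_zero, d22_ne_zero, d23_ne_zero, d41_ne_zero])
      (by simp [d41_ne_zero, d84_ne_zero])
      lPolyNorm_one_mul_lPolyNorm_neg_one_one_neg_one (lPolyNorm_mul_lPolyNorm_neg_one_neg_one h2),
    sum_vonMangoldtSum_logChar hn h4 neg_one_sq (one_pow 2) (.inl hne)
      (by simp [d21_ne_zero, d22_ne_zero, d41_ne_zero])
      (by simp [d21_ne_zero, d82_ne_zero])
      lPolyNorm_one_mul_lPolyNorm_neg_one_neg_one_one (lPolyNorm_mul_lPolyNorm_neg_neg_one_one h2),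
    sum_vonMangoldtSum_logChar hn h4 neg_one_sq neg_one_sq (.inl hne)
      (by simp [d41_ne_zero, d42_ne_zero, d83_ne_zero])
      (by simp [d42_ne_zero, d81_ne_zero])
      lPolyNorm_one_mul_lPolyNorm_neg_one_neg_one_neg_one
      (lPolyNorm_mul_lPolyNorm_neg_neg_one_neg_one h2)]
  simp only [rho_mul, rho_X_pow hn, ne_eq, mul_eq_zero, pow_eq_zero_iff, X_ne_zero, or_self,
    not_false_eq_true, OfNat.ofNat_ne_zero, d21_ne_zero, d22_ne_zero, d23_ne_zero, d41_ne_zero,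
    d42_ne_zero, d81_ne_zero, d82_ne_zero, d83_ne_zero, d84_ne_zero]
  ring

end OrbitSums

theorem statement15_general (n : ℕ) (K : Type) [Field K] [Fintype K]
    (hK : Fintype.card K = 2 ^ n) :
    ((cnt5 n K 0 0 0 0 0 : ℂ)
      = 2 ^ n / 32 - (1 / 32) *
          (7 * rho n d21 + 4 * rho n d22 + 2 * rho n d23 + 5 * rho n d41 + 3 * rho n d42
            + 2 * rho n d81 + rho n d82 + rho n d83 + rho n d84)) ∧
    ((cnt5 n K 0 0 0 1 0 : ℂ)
      = 2 ^ n / 32 - (1 / 32) *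
          (3 * rho n d21 + 2 * rho n d23 + rho n d41 - rho n d42
            - 2 * rho n d81 - rho n d82 + rho n d83 - rho n d84)) ∧
    ((cnt5 n K 0 0 0 0 1 : ℂ)
      = 2 ^ n / 32 - (1 / 32) *
          (rho n d21 + 2 * rho n d22 - 2 * rho n d23 - 3 * rho n d41 - 3 * rho n d42
            + rho n d82 - rho n d83 - rho n d84)) ∧
    ((cnt5 n K 0 0 0 1 1 : ℂ)
      = 2 ^ n / 32 - (1 / 32) *
          (-3 * rho n d21 - 2 * rho n d22 - 2 * rho n d23 + rho n d41 + rho n d42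
            - rho n d82 - rho n d83 + rho n d84)) := by
  have hn : n ≠ 0 := by
    rintro rfl
    exact (Fintype.one_lt_card (α := K)).ne' (by rw [hK, pow_zero])
  have := charP_of_card_eq_prime_pow hK
  let := ZMod.algebra K 2
  have h00 := mul_cnt5_eq hK hn 0 0
  have h10 := mul_cnt5_eq hK hn 1 0
  have h01 := mul_cnt5_eq hK hn 0 1
  have h11 := mul_cnt5_eq hK hn 1 1
  simp only [map_zero, map_one, ZMod.val_zero, ZMod.val_one, pow_zero, pow_one]
    at h00 h10 h01 h11
  refine ⟨?_, ?_, ?_, ?_⟩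
  · linear_combination h00 / 32
  · linear_combination h10 / 32
  · linear_combination h01 / 32
  · linear_combination h11 / 32

theorem statement15 (n : ℕ) (hn : 5 ≤ n)
    (K : Type) [Field K] [Fintype K] (hK : Fintype.card K = 2 ^ n) :
    ((cnt5 n K 0 0 0 0 0 : ℂ)
      = 2 ^ (n - 5) - (1 / 32) *
          (7 * rho n d21 + 4 * rho n d22 + 2 * rho n d23 + 5 * rho n d41 + 3 * rho n d42
            + 2 * rho n d81 + rho n d82 + rho n d83 + rho n d84)) ∧
    ((cnt5 n K 0 0 0 1 0 : ℂ)
      = 2 ^ (n - 5) - (1 / 32) *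
          (3 * rho n d21 + 2 * rho n d23 + rho n d41 - rho n d42
            - 2 * rho n d81 - rho n d82 + rho n d83 - rho n d84)) ∧
    ((cnt5 n K 0 0 0 0 1 : ℂ)
      = 2 ^ (n - 5) - (1 / 32) *
          (rho n d21 + 2 * rho n d22 - 2 * rho n d23 - 3 * rho n d41 - 3 * rho n d42
            + rho n d82 - rho n d83 - rho n d84)) ∧
    ((cnt5 n K 0 0 0 1 1 : ℂ)
      = 2 ^ (n - 5) - (1 / 32) *
          (-3 * rho n d21 - 2 * rho n d22 - 2 * rho n d23 + rho n d41 + rho n d42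
            - rho n d82 - rho n d83 + rho n d84)) := by
  have hpow : (2 : ℂ) ^ (n - 5) = 2 ^ n / 32 := by
    rw [pow_sub₀ _ two_ne_zero hn, div_eq_mul_inv]
    norm_num
  simpa only [hpow] using statement15_general n K hK
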